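/- For every integer n ≥ 1, the polynomial P_n ∈ R[t] has degree n in t with leading coefficient −A^{n+2}, and the polynomial P_{−n} ∈ R[t] has degree n in t with leading coefficient −A^{−n−2}; in particular, for every nonzero integer n the polynomial P_n has degree |n| in t and its leading coefficient is a unit of R. -/

import Mathlib

open Polynomial
open LaurentPolynomial (T)

noncomputable section

abbrev R : Type := LaurentPolynomial ℤ

/-- `P` is the family of polynomials `P n ∈ R[t]` defined by `P 0 = -A^2 - A^-2`,
`P 1 = -A^3 t` and the recurrence `P n = A t P (n-1) - A^2 P (n-2)` for all `n : ℤ`. -/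
def IsP (P : ℤ → R[X]) : Prop :=
  P 0 = C (-T 2 - T (-2)) ∧ P 1 = C (-T 3) * X ∧
    ∀ n : ℤ, P n = C (T 1) * X * P (n - 1) - C (T 2) * P (n - 2)

/-!
A sequence with `deg Q₀ ≤ 0`, `deg Q₁ ≤ 1` and `Q_{k+2} = u_k Q_{k+1} + v_k Q_k`, where `u_k` and
`v_k` have degree at most `1`, satisfies `deg Q_k ≤ k`; only the first term contributes to the
coefficient of `t^{k+2}` in `Q_{k+2}`, so each step multiplies the top coefficient by the linear
coefficient of `u_k`. For `P_n` with `n ≥ 0` that factor is `A`, starting from `-A³` at `n = 1`.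
Negative indices reduce to positive ones: the involution `A ↦ A⁻¹` carries `P_{-n}` to `P_n`,
because `n ↦ P_{-n}` with `A` inverted satisfies the same recurrence and initial conditions.
-/

section ThreeTermRecurrence

variable {S : Type*} [CommSemiring S] {Q u v : ℕ → S[X]}

theorem natDegree_le_of_three_term_recurrence
    (hQ : ∀ k, Q (k + 2) = u k * Q (k + 1) + v k * Q k)
    (hu : ∀ k, (u k).natDegree ≤ 1) (hv : ∀ k, (v k).natDegree ≤ 2)
    (h0 : (Q 0).natDegree ≤ 0) (h1 : (Q 1).natDegree ≤ 1) (k : ℕ) :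
    (Q k).natDegree ≤ k := by
  induction k using Nat.twoStepInduction with
  | zero => exact h0
  | one => exact h1
  | more k ih₀ ih₁ =>
    have hfst : (u k * Q (k + 1)).natDegree ≤ 1 + (k + 1) := natDegree_mul_le_of_le (hu k) ih₁
    have hsnd : (v k * Q k).natDegree ≤ 2 + k := natDegree_mul_le_of_le (hv k) ih₀
    rw [hQ]
    exact natDegree_add_le_of_degree_le (by lia) (by lia)

theorem coeff_succ_self_of_three_term_recurrence
    (hQ : ∀ k, Q (k + 2) = u k * Q (k + 1) + v k * Q k)
    (hu : ∀ k, (u k).natDegree ≤ 1) (hv : ∀ k, (v k).natDegree ≤ 1)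
    (h0 : (Q 0).natDegree ≤ 0) (h1 : (Q 1).natDegree ≤ 1) (k : ℕ) :
    (Q (k + 1)).coeff (k + 1) = (∏ i ∈ Finset.range k, (u i).coeff 1) * (Q 1).coeff 1 := by
  have hdeg : ∀ k, (Q k).natDegree ≤ k :=
    natDegree_le_of_three_term_recurrence hQ hu (fun k => (hv k).trans one_le_two) h0 h1
  induction k with
  | zero => simp
  | succ k ih =>
    have hfst : (u k * Q (k + 1)).coeff (1 + (k + 1)) = (u k).coeff 1 * (Q (k + 1)).coeff (k + 1) :=
      coeff_mul_add_eq_of_natDegree_le (hu k) (hdeg (k + 1))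
    have hsnd : (v k * Q k).coeff (1 + (k + 1)) = 0 :=
      coeff_eq_zero_of_natDegree_lt <|
        (natDegree_mul_le_of_le (hv k) (hdeg k)).trans_lt (by lia)
    rw [hQ, add_comm (k + 1) 1, coeff_add, hfst, hsnd, add_zero, ih, Finset.prod_range_succ_comm,
      mul_assoc]

end ThreeTermRecurrence

namespace IsP

variable {P : ℤ → R[X]}

theorem apply_sub_two (hP : IsP P) (n : ℤ) :
    P (n - 2) = C (T (-1)) * X * P (n - 1) - C (T (-2)) * P n := by
  have hlin : (C (T (-2)) * C (T 1) : R[X]) = C (T (-1)) := by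
    rw [← C_mul, ← LaurentPolynomial.T_add]; norm_num
  have hinv : (C (T (-2)) * C (T 2) : R[X]) = 1 := by
    rw [← C_mul, ← LaurentPolynomial.T_add]; norm_num
  linear_combination C (T (-2)) * hP.2.2 n + X * P (n - 1) * hlin - P (n - 2) * hinv

theorem apply_neg_one (hP : IsP P) : P (-1) = C (-T (-3)) * X := by
  have hsub : P (-1) = C (T (-1)) * X * P 0 - C (T (-2)) * P 1 := hP.apply_sub_two 1
  have hcoeff : (T (-1) * (-T 2 - T (-2)) + T (-2) * T 3 : R) = -T (-3) := by
    simp only [mul_sub, mul_neg, ← LaurentPolynomial.T_add, Int.reduceAdd]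
    ring
  rw [hsub, hP.1, hP.2.1, ← hcoeff]
  simp only [C_add, C_mul, C_neg]
  ring

theorem map_invert_neg (hP : IsP P) :
    IsP fun n => (P (-n)).map (LaurentPolynomial.invert : R ≃ₐ[ℤ] R).toRingHom := by
  have hfix : LaurentPolynomial.invert (-T 2 - T (-2) : R) = -T 2 - T (-2) := by
    simp only [map_sub, map_neg, LaurentPolynomial.invert_T, neg_neg]
    ring
  refine ⟨?_, ?_, fun n => ?_⟩
  · simp only [neg_zero, hP.1, map_C]
    exact congrArg C hfix
  · simp [hP.apply_neg_one]
  · have hrec : P (-n) = C (T (-1)) * X * P (-(n - 1)) - C (T (-2)) * P (-(n - 2)) := by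
      convert hP.apply_sub_two (-(n - 2)) using 3 <;> ring_nf
    simp [hrec]

theorem apply_natCast_add_two (hP : IsP P) (k : ℕ) :
    P ((k + 2 : ℕ) : ℤ) = C (T 1) * X * P ((k + 1 : ℕ) : ℤ) + -C (T 2 : R) * P (k : ℤ) := by
  have hrec := hP.2.2 (k + 2)
  rw [add_sub_cancel_right, show (k : ℤ) + 2 - 1 = k + 1 by ring] at hrec
  push_cast
  linear_combination hrec

theorem natDegree_one_le (hP : IsP P) : (P 1).natDegree ≤ 1 := by
  rw [hP.2.1]
  exact (natDegree_C_mul_le _ _).trans natDegree_X_le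

theorem natDegree_natCast_le (hP : IsP P) (n : ℕ) : (P n).natDegree ≤ n :=
  natDegree_le_of_three_term_recurrence (Q := fun k : ℕ => P k) hP.apply_natCast_add_two
    (fun _ => (natDegree_C_mul_le _ _).trans natDegree_X_le) (fun _ => by simp) (by simp [hP.1])
    hP.natDegree_one_le n

theorem coeff_natCast_self (hP : IsP P) {n : ℕ} (hn : n ≠ 0) :
    (P n).coeff n = -T ((n : ℤ) + 2) := by
  obtain ⟨k, rfl⟩ := Nat.exists_eq_add_one_of_ne_zero hn
  have hone : (P 1).coeff 1 = -T 3 := by rw [hP.2.1, coeff_C_mul, coeff_X_one, mul_one]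
  have hcoeff := coeff_succ_self_of_three_term_recurrence (Q := fun k : ℕ => P k)
    hP.apply_natCast_add_two (fun _ => (natDegree_C_mul_le _ _).trans natDegree_X_le)
    (fun _ => by simp) (by simp [hP.1]) hP.natDegree_one_le k
  rw [Nat.cast_one, hone, Finset.prod_const, Finset.card_range, coeff_C_mul, coeff_X_one,
    mul_one] at hcoeff
  simp only [hcoeff, LaurentPolynomial.T_pow, mul_neg, ← LaurentPolynomial.T_add]
  congr 2
  push_cast
  ring

theorem natDegree_natCast (hP : IsP P) {n : ℕ} (hn : n ≠ 0) : (P n).natDegree = n :=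
  natDegree_eq_of_le_of_coeff_ne_zero (hP.natDegree_natCast_le n) <| by
    rw [hP.coeff_natCast_self hn]
    exact neg_ne_zero.2 (LaurentPolynomial.isUnit_T _).ne_zero

theorem degree_natCast (hP : IsP P) {n : ℕ} (hn : n ≠ 0) : (P n).degree = n :=
  (degree_eq_iff_natDegree_eq_of_pos (Nat.pos_of_ne_zero hn)).2 (hP.natDegree_natCast hn)

theorem leadingCoeff_natCast (hP : IsP P) {n : ℕ} (hn : n ≠ 0) :
    (P n).leadingCoeff = -T ((n : ℤ) + 2) := by
  rw [leadingCoeff, hP.natDegree_natCast hn, hP.coeff_natCast_self hn]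

theorem degree_neg_natCast (hP : IsP P) {n : ℕ} (hn : n ≠ 0) : (P (-n)).degree = n := by
  rw [← hP.map_invert_neg.degree_natCast hn]
  exact (degree_map_eq_of_injective LaurentPolynomial.invert.injective _).symm

theorem leadingCoeff_neg_natCast (hP : IsP P) {n : ℕ} (hn : n ≠ 0) :
    (P (-n)).leadingCoeff = -T (-(n : ℤ) - 2) := by
  have hinvert : LaurentPolynomial.invert (P (-n)).leadingCoeff = -T ((n : ℤ) + 2) :=
    (leadingCoeff_map_of_injective LaurentPolynomial.invert.injective _).symm.trans
      (hP.map_invert_neg.leadingCoeff_natCast hn)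
  apply LaurentPolynomial.invert.injective
  simp only [hinvert, map_neg, LaurentPolynomial.invert_T, neg_sub, sub_neg_eq_add, add_comm]

theorem degree_eq_natAbs (hP : IsP P) {n : ℤ} (hn : n ≠ 0) : (P n).degree = n.natAbs := by
  obtain ⟨m, rfl | rfl⟩ := n.eq_nat_or_neg
  · simpa using hP.degree_natCast (by simpa using hn)
  · simpa using hP.degree_neg_natCast (by simpa using hn)

theorem isUnit_leadingCoeff (hP : IsP P) {n : ℤ} (hn : n ≠ 0) : IsUnit (P n).leadingCoeff := by
  obtain ⟨m, rfl | rfl⟩ := n.eq_nat_or_neg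
  · rw [hP.leadingCoeff_natCast (by simpa using hn)]
    exact (LaurentPolynomial.isUnit_T _).neg
  · rw [hP.leadingCoeff_neg_natCast (by simpa using hn)]
    exact (LaurentPolynomial.isUnit_T _).neg

end IsP

theorem stmt_17 (P : ℤ → R[X]) (hP : IsP P) :
    (∀ n : ℕ, 1 ≤ n →
      (P (n : ℤ)).degree = (n : WithBot ℕ) ∧
        (P (n : ℤ)).leadingCoeff = -T ((n : ℤ) + 2) ∧
      (P (-(n : ℤ))).degree = (n : WithBot ℕ) ∧
        (P (-(n : ℤ))).leadingCoeff = -T (-(n : ℤ) - 2)) ∧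
    ∀ n : ℤ, n ≠ 0 →
      (P n).degree = (n.natAbs : WithBot ℕ) ∧ IsUnit (P n).leadingCoeff := by
  refine ⟨fun n hn => ?_, fun n hn => ⟨hP.degree_eq_natAbs hn, hP.isUnit_leadingCoeff hn⟩⟩
  have hn : n ≠ 0 := Nat.one_le_iff_ne_zero.1 hn
  exact ⟨hP.degree_natCast hn, hP.leadingCoeff_natCast hn, hP.degree_neg_natCast hn,
    hP.leadingCoeff_neg_natCast hn⟩
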